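/- arXiv:2511.03618 — 9 statements merged into one kernel-verified Lean document; each statement's English description precedes it below -/
import Mathlib

section
/- Let S be a nonempty finite type and P : S × S → ℝ a row-stochastic matrix (all entries nonnegative and every row sums to 1) that is irreducible (for all i, j there exists n ∈ ℕ with (P^n) i j > 0) and aperiodic (for every state i, the set of return times {n ≥ 1 : (P^n) i i > 0} has greatest common divisor 1). Then there exists N ≥ 1 such that the matrix power P^N satisfies a Doeblin minorization: there exist ε ∈ (0,1) and a stochastic vector ν : S → ℝ (nonnegative entries summing to 1) such that (P^N) i j ≥ ε · ν j for all i, j. -/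
/-!
Fix a state `o`. The times `n` with `(P ^ n) o o > 0` form an additive submonoid of `ℕ`, which by
aperiodicity has gcd `1`, so it contains all large `n` (`eventually_return_pos`). By irreducibility
every state `i` reaches `o` in some number `a i` of steps; waiting at `o` afterwards shows that for
`N` large the whole column `o` of `P ^ N` is positive. Hence `P ^ N` is minorized by a multiple of
the point mass `ν` at `o`.
-/

open Matrix Finset

/-- The set of return times of state `i` under the stochastic matrix `P`. -/
def returnTimes {S : Type*} [Fintype S] [DecidableEq S] (P : Matrix S S ℝ) (i : S) : Set ℕ :=
  {n | 1 ≤ n ∧ 0 < (P ^ n) i i}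

lemma matrix_pow_nonneg {S : Type*} [Fintype S] [DecidableEq S] {P : Matrix S S ℝ}
    (hP : ∀ i j, 0 ≤ P i j) (n : ℕ) : ∀ i j, 0 ≤ (P ^ n) i j := by
  induction n with
  | zero =>
    intro i j
    rw [pow_zero, Matrix.one_apply]
    split_ifs <;> norm_num
  | succ n ih =>
    intro i j
    rw [pow_succ, Matrix.mul_apply]
    exact Finset.sum_nonneg fun k _ => mul_nonneg (ih i k) (hP k j)

lemma matrix_pow_add_pos {S : Type*} [Fintype S] [DecidableEq S] {P : Matrix S S ℝ}
    (hP : ∀ i j, 0 ≤ P i j) {m n : ℕ} {i j k : S}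
    (hm : 0 < (P ^ m) i j) (hn : 0 < (P ^ n) j k) : 0 < (P ^ (m + n)) i k := by
  rw [pow_add, Matrix.mul_apply]
  exact Finset.sum_pos'
    (fun l _ => mul_nonneg (matrix_pow_nonneg hP m i l) (matrix_pow_nonneg hP n l k))
    ⟨j, Finset.mem_univ j, mul_pos hm hn⟩

/-- An aperiodic state has positive return probability at all large times: the return times
generate an additive submonoid of `ℕ` of gcd `1`, hence a cofinite one, and every time in it has
positive return probability. -/
lemma eventually_return_pos {S : Type*} [Fintype S] [DecidableEq S] {P : Matrix S S ℝ}
    (hP : ∀ i j, 0 ≤ P i j) (o : S)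
    (haper : ∀ d : ℕ, (∀ n ∈ returnTimes P o, d ∣ n) → d = 1) :
    ∃ n₀ : ℕ, ∀ m ≥ n₀, 0 < (P ^ m) o o := by
  obtain ⟨n₀, h⟩ := Nat.exists_mem_closure_of_ge (returnTimes P o)
  have hgcd := haper _ fun n hn => Nat.setGcd_dvd_of_mem hn
  refine ⟨n₀, fun m hm => ?_⟩
  have hmem := h m hm (hgcd ▸ one_dvd m)
  clear hm
  induction hmem using AddSubmonoid.closure_induction with
  | mem x hx => exact hx.2
  | zero => simp
  | add x y _ _ hx hy => exact matrix_pow_add_pos hP hx hy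

/-- Irreducible and aperiodic row-stochastic matrices satisfy a Doeblin minorization
after taking a sufficiently large matrix power. -/
theorem doeblin_minorization_of_irreducible_aperiodic
    {S : Type*} [Fintype S] [Nonempty S] [DecidableEq S] (P : Matrix S S ℝ)
    (hnonneg : ∀ i j, 0 ≤ P i j)
    (hrowsum : ∀ i, ∑ j, P i j = 1)
    (hirr : ∀ i j, ∃ n : ℕ, 0 < (P ^ n) i j)
    (haper : ∀ i, ∀ d : ℕ, (∀ n ∈ returnTimes P i, d ∣ n) → d = 1) :
    ∃ N : ℕ, 1 ≤ N ∧
      ∃ (ε : ℝ) (ν : S → ℝ), 0 < ε ∧ ε < 1 ∧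
        (∀ s, 0 ≤ ν s) ∧ (∑ s, ν s = 1) ∧
        ∀ i j, (P ^ N) i j ≥ ε * ν j := by
  obtain ⟨o⟩ := ‹Nonempty S›
  obtain ⟨n₀, hn₀⟩ := eventually_return_pos hnonneg o (haper o)
  choose a ha using fun i => hirr i o
  -- `N` leaves at least `n₀` steps at `o` after the `a i` steps from any `i` to `o`.
  obtain ⟨N, hN1, hN⟩ : ∃ N : ℕ, 1 ≤ N ∧ ∀ i, a i + n₀ ≤ N := by
    refine ⟨∑ i, a i + n₀ + 1, by omega, fun i => ?_⟩
    have := Finset.single_le_sum (f := a) (fun _ _ => Nat.zero_le _) (Finset.mem_univ i)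
    omega
  have hcol : ∀ i, 0 < (P ^ N) i o := fun i => by
    have h := matrix_pow_add_pos hnonneg (ha i) (hn₀ (N - a i) (by have := hN i; omega))
    rwa [Nat.add_sub_cancel' (by have := hN i; omega)] at h
  obtain ⟨i₀, hi₀⟩ := @Finite.exists_min S ℝ _ ⟨o⟩ _ fun i => (P ^ N) i o
  -- The cap at `1 / 2` only serves to make `ε < 1` when the column is identically `1`.
  refine ⟨N, hN1, min ((P ^ N) i₀ o) (1 / 2), fun s => if s = o then 1 else 0,
    lt_min (hcol i₀) (by norm_num), (min_le_right _ _).trans_lt (by norm_num),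
    fun s => by dsimp only; split_ifs <;> norm_num, by simp, fun i j => ?_⟩
  by_cases hj : j = o
  · subst hj
    simpa using Or.inl (hi₀ i)
  · simpa [hj] using matrix_pow_nonneg hnonneg N i j
end

section
/- Let S be a finite type and P a row-stochastic matrix on S satisfying a Doeblin minorization (there exist ε ∈ (0,1) and a stochastic vector ν with P i j ≥ ε · ν j for all i, j). Then the map μ ↦ μᵀP, viewed as an operator on the probability simplex of S (stochastic vectors equipped with the ℓ¹ metric), is a contraction: there exists K with 0 < K < 1 such that ‖μᵀP − μ'ᵀP‖₁ ≤ K · ‖μ − μ'‖₁ for all stochastic vectors μ, μ'. -/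
/-!
The contraction constant is `1 - ε`. Since `μ` and `μ'` have equal total mass, `P` may be replaced
by the residual matrix `P i j - ε * ν j` when applied to `μ - μ'`. The residual has nonnegative
entries by the minorization and rows summing to `1 - ε`, so the triangle inequality and an exchange
of summations give the bound.
-/

open Finset

/-- A row-stochastic matrix satisfying a Doeblin minorization acts as a contraction
(in the ℓ¹ metric) on the probability simplex via `μ ↦ μᵀ P`. -/
theorem contraction_on_simplex_of_doeblin
    {S : Type*} [Fintype S] (P : Matrix S S ℝ)
    (hnonneg : ∀ i j, 0 ≤ P i j)
    (hrowsum : ∀ i, ∑ j, P i j = 1)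
    (hdoeblin : ∃ (ε : ℝ) (ν : S → ℝ), 0 < ε ∧ ε < 1 ∧
      (∀ s, 0 ≤ ν s) ∧ (∑ s, ν s = 1) ∧ ∀ i j, P i j ≥ ε * ν j) :
    ∃ K : ℝ, 0 < K ∧ K < 1 ∧
      ∀ μ μ' : S → ℝ,
        (∀ s, 0 ≤ μ s) → (∑ s, μ s = 1) →
        (∀ s, 0 ≤ μ' s) → (∑ s, μ' s = 1) →
        ∑ j, |(∑ i, μ i * P i j) - (∑ i, μ' i * P i j)| ≤ K * ∑ s, |μ s - μ' s| := by
  obtain ⟨ε, ν, hε0, hε1, -, hνsum, hmin⟩ := hdoeblin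
  refine ⟨1 - ε, by linarith, by linarith, ?_⟩
  intro μ μ' _ hμ _ hmass
  -- `μ - μ'` has total mass zero, so subtracting `ε * ν j` from every row changes nothing.
  have key : ∀ j, (∑ i, μ i * P i j) - (∑ i, μ' i * P i j)
      = ∑ i, (μ i - μ' i) * (P i j - ε * ν j) := by
    intro j
    simp only [sub_mul, mul_sub, Finset.sum_sub_distrib, ← Finset.sum_mul, hμ, hmass]
    ring
  calc ∑ j, |(∑ i, μ i * P i j) - (∑ i, μ' i * P i j)|
      ≤ ∑ j, ∑ i, |μ i - μ' i| * (P i j - ε * ν j) := by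
        refine Finset.sum_le_sum fun j _ => ?_
        rw [key j]
        refine (Finset.abs_sum_le_sum_abs _ _).trans_eq (Finset.sum_congr rfl fun i _ => ?_)
        rw [abs_mul, abs_of_nonneg (sub_nonneg.2 (hmin i j))]
    _ = (1 - ε) * ∑ s, |μ s - μ' s| := by
        rw [Finset.sum_comm, Finset.mul_sum]
        refine Finset.sum_congr rfl fun i _ => ?_
        rw [← Finset.mul_sum, Finset.sum_sub_distrib, ← Finset.mul_sum, hrowsum, hνsum]
        ring
end

section
/- Let S be a nonempty finite type and P a row-stochastic matrix on S that is irreducible and aperiodic. Then there exists a unique stochastic vector μ : S → ℝ that is stationary for P, i.e., ∑ i, μ i · P i j = μ j for all j. -/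
/-!
Stationary vectors are the fixed points of `v ↦ v ᵥ* P`. Since `P` fixes the all-ones column
vector, `P - 1` is singular, so there is a nonzero real `v` with `v ᵥ* P = v`. The triangle
inequality gives `|v| ≤ |v| ᵥ* P` entrywise, and both sides have the same total mass because the
rows of `P` sum to one, so `|v|` is fixed as well (`abs_fixed`); normalizing it gives existence.

For uniqueness, let `v` be the difference of two stationary vectors, a fixed vector of total mass
zero. If `v ≠ 0`, it has a positive and a negative entry, so `|v| + v` is a nonnegative fixed vector
with both a positive and a zero entry. Irreducibility forbids this (`pos_of_fixed`).
-/

open Finset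

namespace StationaryAux

open Matrix

variable {S : Type*} [Fintype S]

lemma abs_fixed {P : Matrix S S ℝ} (hnonneg : ∀ i j, 0 ≤ P i j)
    (hrowsum : ∀ i, ∑ j, P i j = 1) {v : S → ℝ} (hv : ∀ j, ∑ i, v i * P i j = v j) (j : S) :
    ∑ i, |v i| * P i j = |v j| := by
  have hle : ∀ j ∈ univ, |v j| ≤ ∑ i, |v i| * P i j := fun j _ => by
    rw [← hv j]
    refine (abs_sum_le_sum_abs _ _).trans_eq (sum_congr rfl fun i _ => ?_)
    rw [abs_mul, abs_of_nonneg (hnonneg i j)]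
  have hmass : ∑ j, |v j| = ∑ j, ∑ i, |v i| * P i j := by
    rw [sum_comm]
    simp only [← mul_sum, hrowsum, mul_one]
  exact ((sum_eq_sum_iff_of_le hle).1 hmass j (mem_univ j)).symm

variable [DecidableEq S]

lemma exists_fixed [Nonempty S] {P : Matrix S S ℝ} (hrowsum : ∀ i, ∑ j, P i j = 1) :
    ∃ v : S → ℝ, v ≠ 0 ∧ ∀ j, ∑ i, v i * P i j = v j := by
  have hker : ∃ u : S → ℝ, u ≠ 0 ∧ (P - 1) *ᵥ u = 0 := by
    refine ⟨1, one_ne_zero, ?_⟩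
    rw [sub_mulVec, one_mulVec, sub_eq_zero]
    ext i
    simp [mulVec, dotProduct, hrowsum]
  obtain ⟨v, hv0, hv⟩ := exists_vecMul_eq_zero_iff.2 (exists_mulVec_eq_zero_iff.1 hker)
  rw [vecMul_sub, vecMul_one, sub_eq_zero] at hv
  exact ⟨v, hv0, fun j => congrFun hv j⟩

lemma pow_nonneg' {P : Matrix S S ℝ} (hnonneg : ∀ i j, 0 ≤ P i j) (n : ℕ) (i j : S) :
    0 ≤ (P ^ n) i j := by
  induction n generalizing j with
  | zero => rw [pow_zero, one_apply]; split_ifs <;> norm_num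
  | succ n ih =>
    rw [pow_succ, mul_apply]
    exact sum_nonneg fun k _ => mul_nonneg (ih k) (hnonneg k j)

lemma fixed_pow {P : Matrix S S ℝ} {v : S → ℝ} (hv : ∀ j, ∑ i, v i * P i j = v j) (n : ℕ) :
    v ᵥ* P ^ n = v := by
  induction n with
  | zero => simp
  | succ n ih =>
    rw [pow_succ, ← vecMul_vecMul, ih]
    exact funext hv

/-- A positive entry of a nonnegative fixed vector spreads to every state along a path of
positive probability. -/
lemma pos_of_fixed {P : Matrix S S ℝ} (hnonneg : ∀ i j, 0 ≤ P i j)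
    (hirr : ∀ i j, ∃ n : ℕ, 0 < (P ^ n) i j) {w : S → ℝ} (hw0 : ∀ i, 0 ≤ w i)
    (hw : ∀ j, ∑ i, w i * P i j = w j) {i : S} (hi : 0 < w i) (j : S) : 0 < w j := by
  obtain ⟨n, hn⟩ := hirr i j
  rw [← fixed_pow hw n]
  exact sum_pos' (fun k _ => mul_nonneg (hw0 k) (pow_nonneg' hnonneg n k j))
    ⟨i, mem_univ i, mul_pos hi hn⟩

lemma fixed_eq_zero {P : Matrix S S ℝ} (hnonneg : ∀ i j, 0 ≤ P i j)
    (hrowsum : ∀ i, ∑ j, P i j = 1) (hirr : ∀ i j, ∃ n : ℕ, 0 < (P ^ n) i j) {v : S → ℝ}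
    (hv : ∀ j, ∑ i, v i * P i j = v j) (hsum : ∑ i, v i = 0) : v = 0 := by
  by_contra hne
  obtain ⟨k, hk⟩ := Function.ne_iff.1 hne
  obtain ⟨i, -, hi⟩ := exists_pos_of_sum_zero_of_exists_nonzero v hsum ⟨k, mem_univ k, hk⟩
  obtain ⟨j, -, hj⟩ := exists_pos_of_sum_zero_of_exists_nonzero (fun s => -v s)
    (by rw [sum_neg_distrib, hsum, neg_zero]) ⟨k, mem_univ k, neg_ne_zero.2 hk⟩
  have hw : ∀ j, ∑ i, (|v i| + v i) * P i j = |v j| + v j := fun j => by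
    simp only [add_mul, sum_add_distrib, hv, abs_fixed hnonneg hrowsum hv]
  have hpos := pos_of_fixed hnonneg hirr (w := fun s => |v s| + v s)
    (fun s => by linarith [neg_abs_le (v s)]) hw
    (i := i) (add_pos_of_nonneg_of_pos (abs_nonneg _) hi) j
  have hj' : v j < 0 := neg_pos.1 hj
  simp [abs_of_neg hj'] at hpos

end StationaryAux

/-- An irreducible aperiodic row-stochastic matrix on a nonempty finite type has a
unique stationary distribution. -/
theorem stationary_distribution_uniquely_exists
    {S : Type*} [Fintype S] [Nonempty S] [DecidableEq S] (P : Matrix S S ℝ)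
    (hnonneg : ∀ i j, 0 ≤ P i j)
    (hrowsum : ∀ i, ∑ j, P i j = 1)
    (hirr : ∀ i j, ∃ n : ℕ, 0 < (P ^ n) i j)
    (haper : ∀ i, ∀ d : ℕ, (∀ n ∈ returnTimes P i, d ∣ n) → d = 1) :
    ∃! μ : S → ℝ, ((∀ s, 0 ≤ μ s) ∧ ∑ s, μ s = 1) ∧ ∀ j, ∑ i, μ i * P i j = μ j := by
  obtain ⟨v, hv0, hv⟩ := StationaryAux.exists_fixed hrowsum
  have hc : 0 < ∑ s, |v s| := by
    obtain ⟨k, hk⟩ := Function.ne_iff.1 hv0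
    exact sum_pos' (fun _ _ => abs_nonneg _) ⟨k, mem_univ k, abs_pos.2 hk⟩
  refine existsUnique_of_exists_of_unique
    ⟨fun s => (∑ t, |v t|)⁻¹ * |v s|, ⟨fun s => by positivity, ?_⟩, fun j => ?_⟩ ?_
  · rw [← mul_sum, inv_mul_cancel₀ hc.ne']
  · simp only [mul_assoc]
    rw [← mul_sum, StationaryAux.abs_fixed hnonneg hrowsum hv]
  · rintro μ ν ⟨⟨-, hμ1⟩, hμ⟩ ⟨⟨-, hν1⟩, hν⟩
    refine sub_eq_zero.1 (StationaryAux.fixed_eq_zero hnonneg hrowsum hirr (fun j => ?_) ?_)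
    · simp only [Pi.sub_apply, sub_mul, sum_sub_distrib, hμ, hν]
    · simp only [Pi.sub_apply, sum_sub_distrib, hμ1, hν1, sub_self]
end

section
/- Let S be a nonempty finite type and P a row-stochastic matrix on S that is irreducible and aperiodic, with (unique) stationary distribution μ. Then P mixes geometrically: there exist constants C ≥ 0 and ρ ∈ [0,1) such that for all n ∈ ℕ and all states i, ∑ j, |(P^n) i j − μ j| ≤ C · ρ^n. -/
/-!
The proof is Doeblin's argument. The times `n` with `0 < (P ^ n) i i` form an additive submonoid of
`ℕ` of gcd `1`, hence contain all large integers; with irreducibility, some power `P ^ m` has all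
entries positive (`exists_pow_pos`). A stochastic matrix whose entries are all at least `ε`
contracts the `ℓ¹` norm on vectors of total mass zero by the factor `1 - |S| ε`
(`sum_abs_vecMul_le`). Applied to the differences `(P ^ n) i - μ`, this makes their `ℓ¹` norm
shrink by a fixed factor `r < 1` every `m` steps, and `ρ = r ^ (1 / m)` is the geometric rate.
-/

open Finset

section Powers

variable {S : Type*} [Fintype S] [DecidableEq S] {P : Matrix S S ℝ}

lemma pow_entry_nonneg (hP : ∀ i j, 0 ≤ P i j) (n : ℕ) : ∀ i j, 0 ≤ (P ^ n) i j := by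
  induction n with
  | zero =>
    intro i j
    rw [pow_zero, Matrix.one_apply]
    split_ifs <;> norm_num
  | succ n ih =>
    intro i j
    rw [pow_succ, Matrix.mul_apply]
    exact sum_nonneg fun k _ => mul_nonneg (ih i k) (hP k j)

lemma pow_row_sum (hsum : ∀ i, ∑ j, P i j = 1) (n : ℕ) : ∀ i, ∑ j, (P ^ n) i j = 1 := by
  induction n with
  | zero => intro i; simp [Matrix.one_apply]
  | succ n ih =>
    intro i
    simp_rw [pow_succ, Matrix.mul_apply]
    rw [sum_comm]
    simp_rw [← mul_sum, hsum, mul_one]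
    exact ih i

lemma stationary_pow {μ : S → ℝ} (hμ : ∀ j, ∑ i, μ i * P i j = μ j) (n : ℕ) :
    ∀ j, ∑ i, μ i * (P ^ n) i j = μ j := by
  induction n with
  | zero => intro j; simp [Matrix.one_apply]
  | succ n ih =>
    intro j
    simp_rw [pow_succ, Matrix.mul_apply, mul_sum]
    rw [sum_comm]
    simp_rw [← mul_assoc, ← sum_mul, ih]
    exact hμ j

lemma pow_add_pos (hP : ∀ i j, 0 ≤ P i j) {a b : ℕ} {i j k : S}
    (h₁ : 0 < (P ^ a) i j) (h₂ : 0 < (P ^ b) j k) : 0 < (P ^ (a + b)) i k := by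
  rw [pow_add, Matrix.mul_apply]
  exact (mul_pos h₁ h₂).trans_le <|
    single_le_sum (f := fun l => (P ^ a) i l * (P ^ b) l k)
      (fun l _ => mul_nonneg (pow_entry_nonneg hP a i l) (pow_entry_nonneg hP b l k)) (mem_univ j)

/-- Aperiodicity makes every sufficiently large time a return time, because a submonoid of `ℕ` of
gcd `1` is cofinite. -/
lemma eventually_return (hP : ∀ i j, 0 ≤ P i j) (i : S)
    (haper : ∀ d : ℕ, (∀ n ∈ returnTimes P i, d ∣ n) → d = 1) :
    ∃ N : ℕ, ∀ n ≥ N, 0 < (P ^ n) i i := by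
  obtain ⟨N, hN⟩ := Nat.exists_mem_closure_of_ge (returnTimes P i)
  have hgcd : Nat.setGcd (returnTimes P i) = 1 :=
    haper _ fun n hn => Nat.setGcd_dvd_of_mem hn
  refine ⟨N, fun n hn => ?_⟩
  have hmem := hN n hn (hgcd ▸ one_dvd n)
  clear hn
  induction hmem using AddSubmonoid.closure_induction with
  | mem x hx => exact hx.2
  | zero => simp
  | add x y _ _ hx hy => exact pow_add_pos hP hx hy

lemma exists_pow_pos (hP : ∀ i j, 0 ≤ P i j) (hirr : ∀ i j, ∃ n : ℕ, 0 < (P ^ n) i j)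
    (haper : ∀ i, ∀ d : ℕ, (∀ n ∈ returnTimes P i, d ∣ n) → d = 1) :
    ∃ m : ℕ, 1 ≤ m ∧ ∀ i j, 0 < (P ^ m) i j := by
  choose k hk using hirr
  choose N hN using fun i => eventually_return hP i (haper i)
  refine ⟨1 + ∑ p : S × S, (N p.1 + k p.1 p.2), by omega, fun i j => ?_⟩
  have hle : N i + k i j ≤ ∑ p : S × S, (N p.1 + k p.1 p.2) :=
    single_le_sum (f := fun p : S × S => N p.1 + k p.1 p.2) (fun _ _ => Nat.zero_le _)
      (mem_univ (i, j))
  obtain ⟨t, ht⟩ := Nat.exists_eq_add_of_le hle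
  have h := pow_add_pos hP (hN i (1 + t + N i) (by omega)) (hk i j)
  rwa [show 1 + t + N i + k i j = 1 + ∑ p : S × S, (N p.1 + k p.1 p.2) by omega] at h

end Powers

/-- Doeblin's contraction: on a vector of total mass zero, the constant `ε` may be subtracted from
every entry of `Q` without changing the product. -/
lemma sum_abs_vecMul_le {S : Type*} [Fintype S] {Q : Matrix S S ℝ} {ε : ℝ}
    (hQ : ∀ i j, ε ≤ Q i j) (hsum : ∀ i, ∑ j, Q i j = 1) {v : S → ℝ} (hv : ∑ i, v i = 0) :
    ∑ j, |∑ i, v i * Q i j| ≤ (1 - Fintype.card S * ε) * ∑ i, |v i| := by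
  calc ∑ j, |∑ i, v i * Q i j| = ∑ j, |∑ i, v i * (Q i j - ε)| := by
        simp_rw [mul_sub, sum_sub_distrib, ← sum_mul, hv, zero_mul, sub_zero]
    _ ≤ ∑ j, ∑ i, |v i| * (Q i j - ε) := by
        refine sum_le_sum fun j _ => (abs_sum_le_sum_abs _ _).trans_eq ?_
        refine sum_congr rfl fun i _ => ?_
        rw [abs_mul, abs_of_nonneg (sub_nonneg.2 (hQ i j))]
    _ = (1 - Fintype.card S * ε) * ∑ i, |v i| := by
        rw [sum_comm]
        simp_rw [← mul_sum, sum_sub_distrib, hsum]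
        rw [← sum_mul, mul_comm]
        simp

/-- A bounded sequence that shrinks by a factor `r` every `m` steps decays geometrically, at a rate
and with a constant depending only on the bound, `m` and `r`. -/
lemma geometric_of_step {m : ℕ} (hm : 1 ≤ m) {r : ℝ} (hr0 : 0 < r) (hr1 : r < 1) :
    ∃ ρ : ℝ, 0 ≤ ρ ∧ ρ < 1 ∧ ∀ (B : ℝ) (a : ℕ → ℝ), 0 ≤ B → (∀ n, a n ≤ B) →
      (∀ n, a (n + m) ≤ r * a n) → ∀ n, a n ≤ B / r * ρ ^ n := by
  have hm0 : m ≠ 0 := by omega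
  have hρ0 : 0 ≤ r ^ ((m : ℝ)⁻¹) := Real.rpow_nonneg hr0.le _
  have hρ1 : r ^ ((m : ℝ)⁻¹) < 1 := Real.rpow_lt_one hr0.le hr1 (by positivity)
  have hρm : (r ^ ((m : ℝ)⁻¹)) ^ m = r := Real.rpow_inv_natCast_pow hr0.le hm0
  refine ⟨r ^ ((m : ℝ)⁻¹), hρ0, hρ1, fun B a hB hbound hstep n => ?_⟩
  generalize r ^ ((m : ℝ)⁻¹) = ρ at *
  induction n using Nat.strong_induction_on with
  | _ n ih =>
    rcases lt_or_ge n m with hn | hn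
    · have h : r ≤ ρ ^ n := hρm ▸ pow_le_pow_of_le_one hρ0 hρ1.le hn.le
      calc a n ≤ B := hbound n
        _ = B / r * r := by field_simp
        _ ≤ B / r * ρ ^ n := by gcongr
    · obtain ⟨t, rfl⟩ := Nat.exists_eq_add_of_le' hn
      calc a (t + m) ≤ r * a t := hstep t
        _ ≤ r * (B / r * ρ ^ t) := by gcongr; exact ih t (by omega)
        _ = B / r * ρ ^ (t + m) := by rw [pow_add, hρm]; ring

/-- An irreducible aperiodic row-stochastic matrix on a nonempty finite type mixes
geometrically towards its stationary distribution. -/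
theorem geometric_mixing_of_irreducible_aperiodic
    {S : Type*} [Fintype S] [Nonempty S] [DecidableEq S] (P : Matrix S S ℝ)
    (hnonneg : ∀ i j, 0 ≤ P i j)
    (hrowsum : ∀ i, ∑ j, P i j = 1)
    (hirr : ∀ i j, ∃ n : ℕ, 0 < (P ^ n) i j)
    (haper : ∀ i, ∀ d : ℕ, (∀ n ∈ returnTimes P i, d ∣ n) → d = 1)
    (μ : S → ℝ) (hμnonneg : ∀ s, 0 ≤ μ s) (hμsum : ∑ s, μ s = 1)
    (hμstat : ∀ j, ∑ i, μ i * P i j = μ j) :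
    ∃ (C ρ : ℝ), 0 ≤ C ∧ 0 ≤ ρ ∧ ρ < 1 ∧
      ∀ (n : ℕ) (i : S), ∑ j, |(P ^ n) i j - μ j| ≤ C * ρ ^ n := by
  obtain ⟨m, hm, hpos⟩ := exists_pow_pos hnonneg hirr haper
  obtain ⟨⟨i₀, j₀⟩, hmin⟩ := Finite.exists_min fun p : S × S => (P ^ m) p.1 p.2
  have hε := hpos i₀ j₀
  have hQ : ∀ i j, (P ^ m) i₀ j₀ ≤ (P ^ m) i j := fun i j => hmin (i, j)
  generalize (P ^ m) i₀ j₀ = ε at hε hQ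
  have hcard : (0 : ℝ) < Fintype.card S := by exact_mod_cast Fintype.card_pos
  -- The maximum with `1 / 2` keeps the factor positive: `1 - |S| ε` vanishes when `P ^ m` has
  -- all entries equal.
  obtain ⟨ρ, hρ0, hρ1, hgeom⟩ := geometric_of_step hm (r := max (1 - Fintype.card S * ε) (1 / 2))
    (lt_max_of_lt_right (by norm_num))
    (max_lt (by have := mul_pos hcard hε; linarith) (by norm_num))
  refine ⟨2 / max (1 - Fintype.card S * ε) (1 / 2), ρ, by positivity, hρ0, hρ1, fun n i => ?_⟩
  refine hgeom 2 (fun n => ∑ j, |(P ^ n) i j - μ j|) (by norm_num) (fun n => ?_) (fun n => ?_) n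
  · calc ∑ j, |(P ^ n) i j - μ j| ≤ ∑ j, ((P ^ n) i j + μ j) := by
          refine sum_le_sum fun j _ => abs_le.2 ⟨?_, ?_⟩ <;>
            linarith [pow_entry_nonneg hnonneg n i j, hμnonneg j]
      _ = 2 := by rw [sum_add_distrib, pow_row_sum hrowsum, hμsum]; norm_num
  · have hv : ∑ j, ((P ^ n) i j - μ j) = 0 := by
      rw [sum_sub_distrib, pow_row_sum hrowsum, hμsum, sub_self]
    calc ∑ j, |(P ^ (n + m)) i j - μ j| = ∑ j, |∑ k, ((P ^ n) i k - μ k) * (P ^ m) k j| := by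
          refine sum_congr rfl fun j _ => ?_
          simp_rw [sub_mul]
          rw [sum_sub_distrib, stationary_pow hμstat, pow_add, Matrix.mul_apply]
      _ ≤ (1 - Fintype.card S * ε) * ∑ j, |(P ^ n) i j - μ j| :=
          sum_abs_vecMul_le hQ (pow_row_sum hrowsum m) hv
      _ ≤ max (1 - Fintype.card S * ε) (1 / 2) * ∑ j, |(P ^ n) i j - μ j| := by
          gcongr
          exact le_max_left _ _
end

section
/- (Special case of the Robbins–Siegmund theorem.) Let (Ω, 𝓕, μ) be a probability space, {𝓕ₙ} a filtration, and {zₙ : Ω → ℝ} a sequence of functions such that each zₙ is measurable, integrable, adapted to {𝓕ₙ}, and satisfies zₙ ≥ 0 almost surely. Let {Tₙ} be a sequence of positive reals with ∑ₙ Tₙ = ∞ and ∑ₙ Tₙ² < ∞. Suppose {zₙ} is almost a supermartingale: there exists a constant C ≥ 0 such that for all n, E[z_{n+1} | 𝓕ₙ] ≤ (1 − Tₙ) · zₙ + C · Tₙ² almost surely. Then zₙ → 0 almost surely as n → ∞. -/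
open MeasureTheory Filter Finset

/-!
The process `Y n = f n + ∑ k < n, T k * f k - C * ∑ k < n, T k ^ 2` is a supermartingale, and it is
bounded below by `-C * ∑ T k ^ 2`, hence bounded in `L¹`, so it converges almost surely. As
`∑ T k ^ 2` converges, so does `f n + ∑ k < n, T k * f k` along almost every path. The rest is
deterministic (`tendsto_zero_of_tendsto_add_sum`): the partial sums of `∑ T k * f k` are monotone
and bounded, hence convergent, so `f n` has a limit `L ≥ 0`, and `L > 0` would contradict
`∑ T k = ∞`.
-/

/-- The pathwise step: if `a n + ∑ k < n, T k * a k` converges, with `a ≥ 0` and `∑ T k = ∞`, then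
`a` tends to zero. -/
lemma tendsto_zero_of_tendsto_add_sum {a T : ℕ → ℝ} {c : ℝ} (ha : ∀ n, 0 ≤ a n)
    (hT : ∀ n, 0 < T n) (hTsum : Tendsto (fun n => ∑ k ∈ range n, T k) atTop atTop)
    (h : Tendsto (fun n => a n + ∑ k ∈ range n, T k * a k) atTop (nhds c)) :
    Tendsto a atTop (nhds 0) := by
  obtain ⟨B, hB⟩ := h.bddAbove_range
  have hBn : ∀ n, ∑ k ∈ range n, T k * a k ≤ B := fun n =>
    (le_add_of_nonneg_left (ha n)).trans (hB ⟨n, rfl⟩)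
  have hs : Summable (fun k => T k * a k) :=
    summable_of_sum_range_le (fun k => mul_nonneg (hT k).le (ha k)) hBn
  have hL := h.sub hs.hasSum.tendsto_sum_nat
  simp only [add_sub_cancel_right] at hL
  set L := c - ∑' k, T k * a k
  have hL0 : 0 ≤ L := ge_of_tendsto' hL ha
  rcases hL0.eq_or_lt with h0 | hpos
  · rwa [h0]
  exfalso
  -- A positive limit makes `T k ≤ (T k * a k) / (L / 2)` eventually, so `∑ T k` would converge.
  obtain ⟨N, hN⟩ := eventually_atTop.1 (hL.eventually (lt_mem_nhds (half_lt_self hpos)))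
  have hsT : Summable T := by
    rw [← summable_nat_add_iff N]
    refine Summable.of_nonneg_of_le (fun n => (hT _).le) (fun n => ?_)
      (((summable_nat_add_iff N).2 hs).div_const (L / 2))
    rw [le_div_iff₀ (half_pos hpos)]
    exact mul_le_mul_of_nonneg_left (hN _ (Nat.le_add_left _ _)).le (hT _).le
  exact not_tendsto_nhds_of_tendsto_atTop hTsum _ hsT.hasSum.tendsto_sum_nat

/-- A supermartingale bounded below by a constant converges almost surely. -/
lemma ae_exists_tendsto_of_supermartingale_of_le {Ω : Type*} {m : MeasurableSpace Ω}
    {μ : Measure Ω} [IsProbabilityMeasure μ] {ℱ : Filtration ℕ m} {Y : ℕ → Ω → ℝ}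
    (hY : Supermartingale Y ℱ μ) {B : ℝ} (hB : 0 ≤ B) (hYB : ∀ n, ∀ᵐ ω ∂μ, -B ≤ Y n ω) :
    ∀ᵐ ω ∂μ, ∃ c, Tendsto (fun n => Y n ω) atTop (nhds c) := by
  have hbdd : ∀ n, eLpNorm ((-Y) n) 1 μ ≤ (((∫ ω, Y 0 ω ∂μ) + 2 * B).toNNReal : ENNReal) := by
    intro n
    rw [Pi.neg_apply, eLpNorm_neg, eLpNorm_one_eq_lintegral_enorm,
      ← ofReal_integral_norm_eq_lintegral_enorm (hY.integrable n)]
    refine ENNReal.ofReal_le_ofReal ?_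
    have h1 : ∫ ω, Y n ω ∂μ ≤ ∫ ω, Y 0 ω ∂μ := by
      simpa using hY.setIntegral_le (Nat.zero_le n) MeasurableSet.univ
    calc ∫ ω, ‖Y n ω‖ ∂μ ≤ ∫ ω, (Y n ω + 2 * B) ∂μ := by
          refine integral_mono_ae (hY.integrable n).norm
            ((hY.integrable n).add (integrable_const _)) ?_
          filter_upwards [hYB n] with ω hω
          exact abs_le.2 ⟨by linarith, by linarith⟩
      _ = (∫ ω, Y n ω ∂μ) + 2 * B := by
          rw [integral_add (hY.integrable n) (integrable_const _)]
          simp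
      _ ≤ _ := by linarith
  filter_upwards [hY.neg.exists_ae_tendsto_of_bdd hbdd] with ω hω
  obtain ⟨c, hc⟩ := hω
  exact ⟨-c, by simpa using hc.neg⟩

/-- A special case of the Robbins–Siegmund theorem: an "almost supermartingale"
with Robbins–Monro coefficients converges to zero almost surely. -/
theorem ae_tendsto_zero_of_almost_supermartingale
    {Ω : Type*} {m : MeasurableSpace Ω} {μ : Measure Ω} [IsProbabilityMeasure μ]
    (ℱ : Filtration ℕ m) (f : ℕ → Ω → ℝ)
    (hAdapt : Adapted ℱ f)
    (hfm : ∀ n, Measurable (f n))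
    (hfInt : ∀ n, Integrable (f n) μ)
    (hfnonneg : ∀ n, 0 ≤ᵐ[μ] f n)
    (T : ℕ → ℝ)
    (hTpos : ∀ n, 0 < T n)
    (hTsum : Tendsto (fun n => ∑ k ∈ Finset.range n, T k) atTop atTop)
    (hTsqsum : Summable (fun n => (T n) ^ 2))
    (hAlmostSupermartingale : ∃ C ≥ (0 : ℝ), ∀ n,
      μ[f (n + 1) | ℱ n] ≤ᵐ[μ] (fun ω => (1 - T n) * f n ω + C * T n ^ 2)) :
    ∀ᵐ ω ∂μ, Tendsto (fun n => f n ω) atTop (nhds 0) := by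
  obtain ⟨C, hC, hsup⟩ := hAlmostSupermartingale
  -- `G n` is the correction term: `f n + G n` is the supermartingale, and `G (n + 1)` is
  -- `ℱ n`-measurable.
  let G : ℕ → Ω → ℝ := fun n ω =>
    ∑ k ∈ range n, T k * f k ω - C * ∑ k ∈ range n, T k ^ 2
  have hGmeas : ∀ n i, (∀ k < n, k ≤ i) → StronglyMeasurable[ℱ i] (G n) := by
    intro n i hi
    refine Measurable.stronglyMeasurable ?_
    refine Measurable.sub_const (Finset.measurable_fun_sum _ fun k hk => ?_) _
    exact ((hAdapt k).mono (ℱ.mono (hi k (mem_range.1 hk))) le_rfl).const_mul _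
  have hGint : ∀ n, Integrable (G n) μ := fun n =>
    (integrable_finsetSum _ fun k _ => (hfInt k).const_mul _).sub (integrable_const _)
  have hY : Supermartingale (fun n => f n + G n) ℱ μ := by
    refine supermartingale_nat
      (fun n => (hAdapt n).stronglyMeasurable.add (hGmeas n n fun k hk => hk.le))
      (fun n => (hfInt n).add (hGint n)) fun n => ?_
    filter_upwards [hsup n, condExp_add (hfInt (n + 1)) (hGint (n + 1)) (ℱ n)] with ω h1 h2
    rw [h2, Pi.add_apply, condExp_of_stronglyMeasurable (ℱ.le n)
      (hGmeas (n + 1) n fun k hk => Nat.lt_succ_iff.1 hk) (hGint _)]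
    simp only [G, Pi.add_apply, sum_range_succ]
    linarith
  have hnn : ∀ᵐ ω ∂μ, ∀ n, 0 ≤ f n ω := ae_all_iff.2 hfnonneg
  have hconv := ae_exists_tendsto_of_supermartingale_of_le hY
    (B := C * ∑' k, T k ^ 2) (mul_nonneg hC (tsum_nonneg fun k => sq_nonneg _)) (fun n => by
      filter_upwards [hnn] with ω hω
      have h1 : 0 ≤ ∑ k ∈ range n, T k * f k ω :=
        sum_nonneg fun k _ => mul_nonneg (hTpos k).le (hω k)
      have h2 : C * ∑ k ∈ range n, T k ^ 2 ≤ C * ∑' k, T k ^ 2 :=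
        mul_le_mul_of_nonneg_left (hTsqsum.sum_le_tsum _ fun k _ => sq_nonneg _) hC
      have h3 := hω n
      simp only [G, Pi.add_apply]
      linarith)
  filter_upwards [hnn, hconv] with ω hω ⟨c, hc⟩
  refine tendsto_zero_of_tendsto_add_sum hω hTpos hTsum
    ((hc.add (hTsqsum.hasSum.tendsto_sum_nat.const_mul C)).congr fun n => ?_)
  simp only [G, Pi.add_apply]
  ring
end

section
/- For any real p ≥ 2, the function φ : ℝᵈ → ℝ defined by φ(x) = ½‖x‖ₚ² (half the squared ℓₚ norm) is smooth in the sense that there exists a constant C ≥ 0 such that for all x, y ∈ ℝᵈ: φ(y) ≤ φ(x) + ⟨∇φ(x), y − x⟩ + C·‖y − x‖₂². -/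
/-! Write `S(z) = ∑ |z i| ^ p` and `N = lpNorm p x`, `h = y - x`; then `φ = ½ S ^ (2/p)`, and
`⟨∇φ(x), h⟩ = S(x) ^ (2/p - 1) ∑ |x i| ^ (p-2) x i h i` (`inner_gradient_half_sq_lpNorm`).

If `N ≤ ‖h‖`, every coordinate of `y` is at most `2‖h‖`, so both `φ(y)` and `|⟨∇φ(x), h⟩|` are
`O(‖h‖²)` with constants depending only on `d` and `p`.

If `‖h‖ < N`, concavity of `t ↦ t ^ (2/p)` gives
`φ(y) - φ(x) ≤ (1/p) N ^ (2-p) (S(y) - S(x))`. All coordinates of `x` and `y` lie in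
`[-2N, 2N]`, where `t ↦ |t| ^ p` has second-order error at most `p (p-1) (2N) ^ (p-2) (b-a)²`
(`abs_rpow_le_second_order`). Summing over coordinates, the powers of `N` cancel and the error is
`(p-1) 2 ^ (p-2) ‖h‖²`. -/

open Finset
open scoped RealInnerProductSpace

/-- The ℓₚ norm of a vector in ℝᵈ, for a real exponent `p`. -/
noncomputable def lpNorm {d : ℕ} (p : ℝ) (x : EuclideanSpace ℝ (Fin d)) : ℝ :=
  (∑ i, |x i| ^ p) ^ (1 / p)

/-- A convex power lies above its tangent at `b`. -/
lemma rpow_tangent_le {r a b : ℝ} (hr : 1 ≤ r) (ha : 0 ≤ a) (hb : 0 < b) :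
    b ^ r + r * b ^ (r - 1) * (a - b) ≤ a ^ r := by
  have h1 := one_add_mul_self_le_rpow_one_add (s := a / b - 1)
    (by linarith [div_nonneg ha hb.le]) hr
  rw [add_sub_cancel, Real.div_rpow ha hb.le, le_div_iff₀ (Real.rpow_pos_of_pos hb r)] at h1
  rw [Real.rpow_sub_one hb.ne']
  refine le_trans (le_of_eq ?_) h1
  field_simp

/-- A concave power lies below its tangent at `b`. -/
lemma rpow_le_tangent {r a b : ℝ} (hr0 : 0 ≤ r) (hr : r ≤ 1) (ha : 0 ≤ a) (hb : 0 < b) :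
    a ^ r ≤ b ^ r + r * b ^ (r - 1) * (a - b) := by
  have h1 := rpow_one_add_le_one_add_mul_self (s := a / b - 1)
    (by linarith [div_nonneg ha hb.le]) hr0 hr
  rw [add_sub_cancel, Real.div_rpow ha hb.le, div_le_iff₀ (Real.rpow_pos_of_pos hb r)] at h1
  rw [Real.rpow_sub_one hb.ne']
  refine le_trans h1 (le_of_eq ?_)
  field_simp

lemma rpow_sub_two_mul_self {p a : ℝ} (hp : 2 ≤ p) (ha : 0 ≤ a) :
    a ^ (p - 2) * a = a ^ (p - 1) := by
  rcases ha.eq_or_lt with rfl | h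
  · rw [mul_zero, Real.zero_rpow (by linarith)]
  · rw [← Real.rpow_add_one h.ne']; congr 1; ring

lemma rpow_sub_rpow_le {p a b R : ℝ} (hp : 2 ≤ p) (ha : 0 ≤ a) (hab : a ≤ b) (hbR : b ≤ R) :
    b ^ (p - 2) * b - a ^ (p - 2) * a ≤ (p - 1) * R ^ (p - 2) * (b - a) := by
  rw [rpow_sub_two_mul_self hp ha, rpow_sub_two_mul_self hp (ha.trans hab)]
  rcases (ha.trans hab).eq_or_lt with rfl | hb
  · obtain rfl : a = 0 := le_antisymm hab ha
    simp
  have h1 := rpow_tangent_le (r := p - 1) (by linarith) ha hb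
  have h2 : b ^ (p - 2) ≤ R ^ (p - 2) := Real.rpow_le_rpow hb.le hbR (by linarith)
  have h3 : (p - 1) * b ^ (p - 2) * (b - a) ≤ (p - 1) * R ^ (p - 2) * (b - a) := by
    have : 0 ≤ p - 1 := by linarith
    have : 0 ≤ b - a := by linarith
    gcongr
  rw [show p - 1 - 1 = p - 2 by ring] at h1
  linarith

/-- One-sided Lipschitz bound for `t ↦ |t| ^ (p-2) t` on `[-R, R]`, for ordered arguments. -/
lemma signed_rpow_sub_le {p a b R : ℝ} (hp : 2 ≤ p) (ha : |a| ≤ R) (hb : |b| ≤ R)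
    (hab : a ≤ b) :
    |b| ^ (p - 2) * b - |a| ^ (p - 2) * a ≤ (p - 1) * R ^ (p - 2) * (b - a) := by
  rcases le_total 0 a with h0 | h0
  · rw [abs_of_nonneg h0, abs_of_nonneg (h0.trans hab)]
    exact rpow_sub_rpow_le hp h0 hab ((le_abs_self b).trans hb)
  rcases le_total b 0 with h1 | h1
  · rw [abs_of_nonpos h0, abs_of_nonpos h1]
    have := rpow_sub_rpow_le (a := -b) (b := -a) hp (by linarith) (by linarith)
      ((neg_le_abs a).trans ha)
    linarith
  · have hR : 0 ≤ R := (abs_nonneg a).trans ha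
    have ea : |a| ^ (p - 2) ≤ R ^ (p - 2) :=
      Real.rpow_le_rpow (abs_nonneg a) ha (by linarith)
    have eb : |b| ^ (p - 2) ≤ R ^ (p - 2) :=
      Real.rpow_le_rpow (abs_nonneg b) hb (by linarith)
    have e1 := mul_le_mul_of_nonneg_right ea (neg_nonneg.2 h0)
    have e2 := mul_le_mul_of_nonneg_right eb h1
    have e3 : 0 ≤ (p - 2) * (R ^ (p - 2) * (b - a)) :=
      mul_nonneg (by linarith) (mul_nonneg (Real.rpow_nonneg hR _) (by linarith))
    linarith

lemma signed_rpow_mul_le {p a b R : ℝ} (hp : 2 ≤ p) (ha : |a| ≤ R) (hb : |b| ≤ R) :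
    (|b| ^ (p - 2) * b - |a| ^ (p - 2) * a) * (b - a) ≤ (p - 1) * R ^ (p - 2) * (b - a) ^ 2 := by
  rcases le_total a b with h | h
  · have := mul_le_mul_of_nonneg_right (signed_rpow_sub_le hp ha hb h) (sub_nonneg.2 h)
    linarith
  · have := mul_le_mul_of_nonneg_right (signed_rpow_sub_le hp hb ha h) (sub_nonneg.2 h)
    linarith

/-- `t ↦ |t| ^ p` lies above its tangent at `b`. -/
lemma abs_rpow_tangent_le {p : ℝ} (hp : 2 ≤ p) (a b : ℝ) :
    |b| ^ p + p * (|b| ^ (p - 2) * b) * (a - b) ≤ |a| ^ p := by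
  rcases eq_or_ne b 0 with rfl | hb
  · rw [abs_zero, Real.zero_rpow (by linarith)]
    have := Real.rpow_nonneg (abs_nonneg a) p
    simpa using this
  have h1 := rpow_tangent_le (r := p) (by linarith) (abs_nonneg a) (abs_pos.2 hb)
  rw [← rpow_sub_two_mul_self hp (abs_nonneg b)] at h1
  have h2 : b * (a - b) ≤ |b| * (|a| - |b|) := by
    have := le_abs_self (b * a)
    rw [abs_mul] at this
    nlinarith [abs_mul_abs_self b]
  have h3 : 0 ≤ p * |b| ^ (p - 2) :=
    mul_nonneg (by linarith) (Real.rpow_nonneg (abs_nonneg b) _)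
  have h4 := mul_le_mul_of_nonneg_left h2 h3
  linarith

/-- Second-order upper bound for `t ↦ |t| ^ p` on `[-R, R]`: convexity bounds the first-order
error by the increment of the derivative, which is Lipschitz there. -/
lemma abs_rpow_le_second_order {p a b R : ℝ} (hp : 2 ≤ p) (ha : |a| ≤ R) (hb : |b| ≤ R) :
    |b| ^ p - |a| ^ p ≤
      p * (|a| ^ (p - 2) * a * (b - a)) + p * ((p - 1) * R ^ (p - 2)) * (b - a) ^ 2 := by
  have h1 := abs_rpow_tangent_le hp a b
  have h2 := mul_le_mul_of_nonneg_left (signed_rpow_mul_le hp ha hb) (by linarith : 0 ≤ p)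
  linarith

section

variable {d : ℕ} {p : ℝ}

lemma sum_abs_rpow_nonneg (x : EuclideanSpace ℝ (Fin d)) : 0 ≤ ∑ i, |x i| ^ p :=
  Finset.sum_nonneg fun _ _ => Real.rpow_nonneg (abs_nonneg _) _

lemma lpNorm_nonneg (x : EuclideanSpace ℝ (Fin d)) : 0 ≤ lpNorm p x :=
  Real.rpow_nonneg (sum_abs_rpow_nonneg x) _

lemma lpNorm_sq (x : EuclideanSpace ℝ (Fin d)) :
    lpNorm p x ^ 2 = (∑ i, |x i| ^ p) ^ (2 / p) := by
  rw [lpNorm, ← Real.rpow_mul_natCast (sum_abs_rpow_nonneg x)]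
  congr 1
  push_cast
  ring

lemma lpNorm_rpow (hp : 2 ≤ p) (x : EuclideanSpace ℝ (Fin d)) :
    lpNorm p x ^ p = ∑ i, |x i| ^ p := by
  rw [lpNorm, ← Real.rpow_mul (sum_abs_rpow_nonneg x), one_div_mul_cancel (by linarith),
    Real.rpow_one]

lemma abs_apply_le_lpNorm (hp : 2 ≤ p) (x : EuclideanSpace ℝ (Fin d)) (i : Fin d) :
    |x i| ≤ lpNorm p x := by
  rw [← Real.rpow_le_rpow_iff (abs_nonneg _) (lpNorm_nonneg x) (by linarith : 0 < p),
    lpNorm_rpow hp]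
  exact Finset.single_le_sum (f := fun i => |x i| ^ p)
    (fun _ _ => Real.rpow_nonneg (abs_nonneg _) _) (Finset.mem_univ i)

lemma abs_apply_le_norm (x : EuclideanSpace ℝ (Fin d)) (i : Fin d) : |x i| ≤ ‖x‖ := by
  simpa using PiLp.norm_apply_le x i

lemma lpNorm_sq_le (hp : 2 ≤ p) (x : EuclideanSpace ℝ (Fin d)) {M : ℝ} (hM : 0 ≤ M)
    (h : ∀ i, |x i| ≤ M) : lpNorm p x ^ 2 ≤ (d : ℝ) ^ (2 / p) * M ^ 2 := by
  have h1 : ∑ i, |x i| ^ p ≤ d * M ^ p := by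
    calc ∑ i, |x i| ^ p ≤ ∑ _i : Fin d, M ^ p := by
          gcongr with i
          exact h i
      _ = d * M ^ p := by simp
  rw [lpNorm_sq]
  calc (∑ i, |x i| ^ p) ^ (2 / p) ≤ (d * M ^ p) ^ (2 / p) :=
        Real.rpow_le_rpow (sum_abs_rpow_nonneg x) h1 (by positivity)
    _ = (d : ℝ) ^ (2 / p) * M ^ 2 := by
        rw [Real.mul_rpow (by positivity) (by positivity), ← Real.rpow_mul hM,
          mul_div_cancel₀ _ (by linarith : p ≠ 0), Real.rpow_two]

/-- The gradient of `½‖·‖ₚ²`, tested against `h`. The formula also holds at `x = 0`, where the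
sum vanishes. -/
lemma inner_gradient_half_sq_lpNorm (hp : 2 ≤ p) (x h : EuclideanSpace ℝ (Fin d)) :
    ⟪gradient (fun z => (1 / 2) * lpNorm p z ^ 2) x, h⟫ =
      (∑ i, |x i| ^ p) ^ (2 / p - 1) * ∑ i, |x i| ^ (p - 2) * x i * h i := by
  rw [gradient, InnerProductSpace.toDual_symm_apply]
  rcases eq_or_ne x 0 with rfl | hx
  · -- `φ(z) = O(‖z‖²)` near the origin, so the derivative there is zero.
    have hO : (fun z : EuclideanSpace ℝ (Fin d) => (1 / 2) * lpNorm p z ^ 2) =O[nhds 0]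
        fun z => ‖z - 0‖ ^ 2 := by
      refine Asymptotics.IsBigO.of_bound ((1 / 2) * (d : ℝ) ^ (2 / p)) (.of_forall fun z => ?_)
      have h1 := lpNorm_sq_le hp z (norm_nonneg z) (abs_apply_le_norm z)
      rw [sub_zero, Real.norm_of_nonneg (by positivity), Real.norm_of_nonneg (by positivity)]
      linarith
    rw [(hO.hasFDerivAt one_lt_two).fderiv]
    simp
  · have hS : 0 < ∑ i, |x i| ^ p := by
      obtain ⟨i, hi⟩ : ∃ i, x i ≠ 0 := by
        by_contra! hc
        exact hx (by ext i; simpa using hc i)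
      exact Finset.sum_pos' (fun _ _ => Real.rpow_nonneg (abs_nonneg _) _)
        ⟨i, Finset.mem_univ i, Real.rpow_pos_of_pos (abs_pos.2 hi) _⟩
    have h1 : ∀ i, HasFDerivAt (fun z : EuclideanSpace ℝ (Fin d) => |z i| ^ p)
        ((p * |x i| ^ (p - 2) * x i) • (EuclideanSpace.proj i : _ →L[ℝ] ℝ)) x := fun i =>
      HasDerivAt.comp_hasFDerivAt (h₂ := fun t : ℝ => |t| ^ p) x
        (hasDerivAt_abs_rpow (x i) (by linarith : 1 < p))
        (EuclideanSpace.proj i : EuclideanSpace ℝ (Fin d) →L[ℝ] ℝ).hasFDerivAt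
    have h2 := ((HasFDerivAt.fun_sum fun i (_ : i ∈ Finset.univ) => h1 i).rpow_const
      (p := 2 / p) (Or.inl hS.ne')).const_mul (1 / 2)
    simp_rw [lpNorm_sq]
    rw [h2.fderiv]
    simp only [smul_apply, _root_.sum_apply, smul_eq_mul, PiLp.proj_apply,
      Finset.mul_sum]
    refine Finset.sum_congr rfl fun i _ => ?_
    have : p ≠ 0 := by linarith
    field_simp

end

/-- For `p ≥ 2`, the function `φ(x) = ½‖x‖ₚ²` is smooth: there is a constant `C ≥ 0`
such that `φ(y) ≤ φ(x) + ⟨∇φ(x), y − x⟩ + C‖y − x‖₂²` for all `x, y`. -/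
theorem half_sq_lp_norm_smooth {d : ℕ} (p : ℝ) (hp : 2 ≤ p) :
    ∃ C ≥ (0 : ℝ), ∀ x y : EuclideanSpace ℝ (Fin d),
      (1 / 2) * lpNorm p y ^ 2 ≤
        (1 / 2) * lpNorm p x ^ 2
          + ⟪gradient (fun z => (1 / 2) * lpNorm p z ^ 2) x, y - x⟫
          + C * ‖y - x‖ ^ 2 := by
  have hp1 : 0 ≤ p - 1 := by linarith
  have hp0 : 0 < p := by linarith
  refine ⟨(2 * (d : ℝ) ^ (2 / p) + d) + (p - 1) * 2 ^ (p - 2), by positivity, fun x y => ?_⟩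
  rw [inner_gradient_half_sq_lpNorm hp, add_mul]
  obtain ⟨h, rfl⟩ : ∃ h, y = x + h := ⟨y - x, by abel⟩
  rw [add_sub_cancel_left]
  have hN0 : 0 ≤ lpNorm p x := lpNorm_nonneg x
  have hS : lpNorm p x ^ p = ∑ i, |x i| ^ p := lpNorm_rpow hp x
  have hxN : ∀ i, |x i| ≤ lpNorm p x := abs_apply_le_lpNorm hp x
  have hyi : ∀ i, |(x + h) i| ≤ lpNorm p x + ‖h‖ := fun i =>
    (abs_add_le (x i) (h i)).trans (add_le_add (hxN i) (abs_apply_le_norm h i))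
  have hsq : lpNorm p (x + h) ^ 2 = (∑ i, |(x + h) i| ^ p) ^ (2 / p) := lpNorm_sq _
  have hsqx : lpNorm p x ^ 2 = (∑ i, |x i| ^ p) ^ (2 / p) := lpNorm_sq _
  set N := lpNorm p x with hN
  have hSN : (∑ i, |x i| ^ p) ^ (2 / p - 1) = N ^ (2 - p) := by
    rw [← hS, ← Real.rpow_mul hN0]
    congr 1
    field_simp
  have hlast : 0 ≤ (p - 1) * 2 ^ (p - 2) * ‖h‖ ^ 2 := by positivity
  rcases le_or_gt N ‖h‖ with hcase | hcase
  · have h1 := lpNorm_sq_le hp (x + h) (M := 2 * ‖h‖) (by positivity)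
      fun i => (hyi i).trans (by linarith)
    have h2 : -(d * ‖h‖ ^ 2) ≤
        (∑ i, |x i| ^ p) ^ (2 / p - 1) * ∑ i, |x i| ^ (p - 2) * x i * h i := by
      rw [hSN]
      rcases hN0.eq_or_lt with hz | hpos
      · have : ∀ i, x i = 0 := fun i => abs_nonpos_iff.1 (hz ▸ hxN i)
        simp only [this, mul_zero, zero_mul, Finset.sum_const_zero]
        have : 0 ≤ d * ‖h‖ ^ 2 := by positivity
        linarith
      have hterm : ∀ i, -(N ^ (p - 2) * N * ‖h‖) ≤ |x i| ^ (p - 2) * x i * h i := fun i => by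
        refine neg_le_of_abs_le ?_
        rw [abs_mul, abs_mul, abs_of_nonneg (Real.rpow_nonneg (abs_nonneg (x i)) _)]
        have := hxN i
        have := abs_apply_le_norm h i
        have : |x i| ^ (p - 2) ≤ N ^ (p - 2) :=
          Real.rpow_le_rpow (abs_nonneg _) (hxN i) (by linarith)
        gcongr
      have hsum : d * -(N ^ (p - 2) * N * ‖h‖) ≤ ∑ i, |x i| ^ (p - 2) * x i * h i := by
        simpa using Finset.sum_le_sum fun i (_ : i ∈ Finset.univ) => hterm i
      have hc : N ^ (2 - p) * N ^ (p - 2) = 1 := by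
        rw [← Real.rpow_add hpos]; simp
      have h3 := mul_le_mul_of_nonneg_left hsum (Real.rpow_nonneg hN0 (2 - p))
      have h4 : N ^ (2 - p) * (d * -(N ^ (p - 2) * N * ‖h‖)) = -(d * (N * ‖h‖)) := by
        linear_combination (-(d * N * ‖h‖)) * hc
      have h5 : (d : ℝ) * (N * ‖h‖) ≤ d * ‖h‖ ^ 2 := by
        rw [sq]; gcongr
      linarith
    have h6 : 0 ≤ N ^ 2 := sq_nonneg N
    linarith
  · have hpos : 0 < N := (norm_nonneg h).trans_lt hcase
    have hSpos : 0 < ∑ i, |x i| ^ p := hS ▸ Real.rpow_pos_of_pos hpos p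
    -- Concavity of `t ↦ t ^ (2/p)` reduces the claim to the `p`-th power sums.
    have h1 := rpow_le_tangent (r := 2 / p) (by positivity) ((div_le_one hp0).2 hp)
      (sum_abs_rpow_nonneg (p := p) (x + h)) hSpos
    rw [← hsq, ← hsqx, hSN] at h1
    rw [hSN]
    have h2 : ∑ i, |(x + h) i| ^ p - ∑ i, |x i| ^ p ≤
        p * ∑ i, |x i| ^ (p - 2) * x i * h i
          + p * ((p - 1) * (2 * N) ^ (p - 2)) * ‖h‖ ^ 2 := by
      rw [EuclideanSpace.real_norm_sq_eq, Finset.mul_sum, Finset.mul_sum,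
        ← Finset.sum_sub_distrib, ← Finset.sum_add_distrib]
      refine Finset.sum_le_sum fun i _ => ?_
      have := abs_rpow_le_second_order (a := x i) (b := (x + h) i) (R := 2 * N) hp
        ((hxN i).trans (by linarith)) ((hyi i).trans (by linarith))
      simpa using this
    rw [Real.mul_rpow (by norm_num) hN0] at h2
    have hc : N ^ (2 - p) * N ^ (p - 2) = 1 := by
      rw [← Real.rpow_add hpos]; simp
    have h3 := mul_le_mul_of_nonneg_left h2
      (mul_nonneg (by positivity : 0 ≤ 1 / p) (Real.rpow_nonneg hN0 (2 - p)))
    have h4 : 1 / p * N ^ (2 - p) * (p * ∑ i, |x i| ^ (p - 2) * x i * h i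
          + p * ((p - 1) * (2 ^ (p - 2) * N ^ (p - 2))) * ‖h‖ ^ 2) =
        N ^ (2 - p) * ∑ i, |x i| ^ (p - 2) * x i * h i
          + (p - 1) * 2 ^ (p - 2) * ‖h‖ ^ 2 := by
      have hpp : 1 / p * p = 1 := by field_simp
      linear_combination (N ^ (2 - p) * ∑ i, |x i| ^ (p - 2) * x i * h i
          + N ^ (2 - p) * ((p - 1) * (2 ^ (p - 2) * N ^ (p - 2))) * ‖h‖ ^ 2) * hpp
          + (p - 1) * 2 ^ (p - 2) * ‖h‖ ^ 2 * hc
    have h5 : 2 / p = 2 * (1 / p) := by ring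
    rw [h5] at h1
    have h6 : 0 ≤ (2 * (d : ℝ) ^ (2 * (1 / p)) + d) * ‖h‖ ^ 2 := by positivity
    rw [h5]
    linarith
end

section
/- Let A = Xᵀ D_π (γP_π − I) X be the linear TD matrix associated with an irreducible aperiodic finite Markov chain P_π with stationary distribution d_π, full-column-rank feature matrix X, and discount γ ∈ [0,1); let b = Xᵀ D_π r_π and w* = −A⁻¹ b the TD fixed point. Define f(w) = A w + b + w. Then there exists η > 0 such that for all w ∈ ℝᴷ: ⟨∇(½‖w − w*‖₂²), f(w) − w⟩ = ⟨w − w*, A(w − w*)⟩ ≤ −η·‖w − w*‖₂², i.e., f satisfies the Lyapunov drift condition with the Lyapunov function φ(x) = ½‖x‖₂². -/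
/-!
Writing `v = X u`, the quadratic form of `A` is `∑ᵢ dᵢ vᵢ (γ (P v)ᵢ - vᵢ)`. The inequality
`2 vᵢ vⱼ ≤ vᵢ² + vⱼ²`, weighted by `dᵢ Pᵢⱼ` (a coupling whose two marginals are both `d`, by
stationarity), gives `⟨v, P v⟩_d ≤ ⟨v, v⟩_d`, so the form is at most `-(1 - γ) ∑ d v²`
(`td_form_le`). Irreducibility makes `d` strictly positive (`stationary_pos`), and a left inverse of
`X` together with a weighted Cauchy–Schwarz inequality bounds `u ⬝ᵥ u` by a constant times
`∑ d (X u)²` (`exists_norm_bound`). Hence `A` is negative definite, with an explicit `η`, and in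
particular invertible, so `A w* + b = 0` and `f w - w = A (w - w*)`.
-/

open Finset Matrix

lemma stationary_pow_s10 {S : Type*} [Fintype S] [DecidableEq S] (P : Matrix S S ℝ) (d : S → ℝ)
    (hdstat : ∀ j, ∑ i, d i * P i j = d j) (n : ℕ) : d ᵥ* (P ^ n) = d := by
  induction n with
  | zero => simp
  | succ n ih =>
    rw [pow_succ, ← Matrix.vecMul_vecMul, ih]
    ext j
    exact hdstat j

lemma stochastic_pow_nonneg {S : Type*} [Fintype S] [DecidableEq S] (P : Matrix S S ℝ)
    (hnonneg : ∀ i j, 0 ≤ P i j) (n : ℕ) (i j : S) : 0 ≤ (P ^ n) i j := by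
  induction n generalizing i j with
  | zero =>
    rw [pow_zero, Matrix.one_apply]
    split_ifs <;> norm_num
  | succ n ih =>
    rw [pow_succ, Matrix.mul_apply]
    exact Finset.sum_nonneg fun k _ => mul_nonneg (ih i k) (hnonneg k j)

/-- Some state has positive mass, and irreducibility transports that mass to every other state. -/
lemma stationary_pos {S : Type*} [Fintype S] [DecidableEq S] (P : Matrix S S ℝ)
    (hnonneg : ∀ i j, 0 ≤ P i j) (hirr : ∀ i j, ∃ n : ℕ, 0 < (P ^ n) i j)
    (d : S → ℝ) (hdnonneg : ∀ s, 0 ≤ d s) (hdsum : ∑ s, d s = 1)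
    (hdstat : ∀ j, ∑ i, d i * P i j = d j) (j : S) : 0 < d j := by
  obtain ⟨i, -, hi⟩ : ∃ i ∈ Finset.univ, 0 < d i := by
    by_contra! h
    have := Finset.sum_nonpos h
    linarith
  obtain ⟨n, hn⟩ := hirr i j
  have h : ∑ k, d k * (P ^ n) k j = d j := congrFun (stationary_pow_s10 P d hdstat n) j
  rw [← h]
  exact lt_of_lt_of_le (mul_pos hi hn)
    (Finset.single_le_sum (f := fun k => d k * (P ^ n) k j)
      (fun k _ => mul_nonneg (hdnonneg k) (stochastic_pow_nonneg P hnonneg n k j))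
      (Finset.mem_univ i))

/-- `⟨v, P v⟩_d ≤ ⟨v, v⟩_d`: a consequence of `P` being a contraction on `L²(d)`. -/
lemma stationary_form_le {S : Type*} [Fintype S] (P : Matrix S S ℝ)
    (hnonneg : ∀ i j, 0 ≤ P i j) (hrowsum : ∀ i, ∑ j, P i j = 1)
    (d : S → ℝ) (hdnonneg : ∀ s, 0 ≤ d s) (hdstat : ∀ j, ∑ i, d i * P i j = d j) (v : S → ℝ) :
    ∑ i, ∑ j, d i * P i j * (v i * v j) ≤ ∑ i, d i * v i ^ 2 := by
  have h1 : ∑ i, ∑ j, d i * P i j * v i ^ 2 = ∑ i, d i * v i ^ 2 := by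
    refine Finset.sum_congr rfl fun i _ => ?_
    rw [← Finset.sum_mul, ← Finset.mul_sum, hrowsum, mul_one]
  have h2 : ∑ i, ∑ j, d i * P i j * v j ^ 2 = ∑ i, d i * v i ^ 2 := by
    rw [Finset.sum_comm]
    refine Finset.sum_congr rfl fun j _ => ?_
    rw [← Finset.sum_mul, hdstat]
  have h3 : ∑ i, ∑ j, 2 * (d i * P i j * (v i * v j)) ≤
      ∑ i, ∑ j, (d i * P i j * v i ^ 2 + d i * P i j * v j ^ 2) := by
    refine Finset.sum_le_sum fun i _ => Finset.sum_le_sum fun j _ => ?_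
    nlinarith [mul_nonneg (mul_nonneg (hdnonneg i) (hnonneg i j)) (sq_nonneg (v i - v j))]
  simp only [Finset.sum_add_distrib, ← Finset.mul_sum] at h3
  linarith

lemma td_form_le {S : Type*} [Fintype S] [DecidableEq S] {K : ℕ} (P : Matrix S S ℝ)
    (hnonneg : ∀ i j, 0 ≤ P i j) (hrowsum : ∀ i, ∑ j, P i j = 1)
    (d : S → ℝ) (hdnonneg : ∀ s, 0 ≤ d s) (hdstat : ∀ j, ∑ i, d i * P i j = d j)
    (X : Matrix S (Fin K) ℝ) (γ : ℝ) (hγ0 : 0 ≤ γ) (u : Fin K → ℝ) :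
    u ⬝ᵥ (Xᵀ * Matrix.diagonal d * (γ • P - 1) * X).mulVec u ≤
      -((1 - γ) * ∑ s, d s * (X.mulVec u) s ^ 2) := by
  set v := X.mulVec u with hv
  have h : u ⬝ᵥ (Xᵀ * Matrix.diagonal d * (γ • P - 1) * X).mulVec u =
      γ * ∑ i, ∑ j, d i * P i j * (v i * v j) - ∑ i, d i * v i ^ 2 := by
    rw [← Matrix.mulVec_mulVec, ← hv, ← Matrix.mulVec_mulVec, ← Matrix.mulVec_mulVec,
      Matrix.dotProduct_mulVec, Matrix.vecMul_transpose, ← hv, Matrix.sub_mulVec,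
      Matrix.one_mulVec, Matrix.smul_mulVec, Finset.mul_sum, ← Finset.sum_sub_distrib]
    refine Finset.sum_congr rfl fun i _ => ?_
    have h1 : ∑ j, d i * P i j * (v i * v j) = d i * v i * (P *ᵥ v) i := by
      simp only [Matrix.mulVec, dotProduct, Finset.mul_sum]
      exact Finset.sum_congr rfl fun j _ => by ring
    rw [h1, Matrix.mulVec_diagonal]
    simp only [Pi.sub_apply, Pi.smul_apply, smul_eq_mul]
    ring
  rw [h]
  nlinarith [mul_le_mul_of_nonneg_left
    (stationary_form_le P hnonneg hrowsum d hdnonneg hdstat v) hγ0]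

lemma exists_norm_bound {S : Type*} [Fintype S] [DecidableEq S] {K : ℕ} (d : S → ℝ)
    (hd : ∀ s, 0 < d s) (X : Matrix S (Fin K) ℝ) (hX : Function.Injective X.mulVec) :
    ∃ C > (0 : ℝ), ∀ u : Fin K → ℝ, u ⬝ᵥ u ≤ C * ∑ s, d s * (X.mulVec u) s ^ 2 := by
  obtain ⟨g, hg⟩ := X.mulVecLin.exists_leftInverse_of_injective (LinearMap.ker_eq_bot.2 hX)
  set Y := LinearMap.toMatrix' g
  have hY : ∀ u, Y.mulVec (X.mulVec u) = u := fun u => by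
    rw [LinearMap.toMatrix'_mulVec]
    exact LinearMap.congr_fun hg u
  have hC : 0 ≤ ∑ k, ∑ s, Y k s ^ 2 / d s :=
    Finset.sum_nonneg fun k _ => Finset.sum_nonneg fun s _ => div_nonneg (sq_nonneg _) (hd s).le
  refine ⟨(∑ k, ∑ s, Y k s ^ 2 / d s) + 1, by linarith, fun u => ?_⟩
  set v := X.mulVec u with hv
  have hQ : 0 ≤ ∑ s, d s * v s ^ 2 :=
    Finset.sum_nonneg fun s _ => mul_nonneg (hd s).le (sq_nonneg _)
  have h : u ⬝ᵥ u ≤ (∑ k, ∑ s, Y k s ^ 2 / d s) * ∑ s, d s * v s ^ 2 := by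
    rw [Finset.sum_mul]
    refine Finset.sum_le_sum fun k _ => ?_
    have hk : u k = ∑ s, Y k s * v s := (congrFun (hY u) k).symm
    rw [← pow_two, hk]
    -- Cauchy–Schwarz with weights: `(Y v)² = (Y² / d) * (d v²)` termwise.
    refine Finset.sum_sq_le_sum_mul_sum_of_sq_le_mul _
      (fun s _ => div_nonneg (sq_nonneg _) (hd s).le)
      (fun s _ => mul_nonneg (hd s).le (sq_nonneg _)) (fun s _ => ?_)
    have := (hd s).ne'
    exact le_of_eq (by field_simp)
  linarith

/-- With `A = Xᵀ D_π (γ P_π − I) X`, `b = Xᵀ D_π r_π`, `w* = −A⁻¹ b` and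
`f(w) = A w + b + w`, the Lyapunov drift condition holds for `φ(x) = ½‖x‖₂²`:
`⟨∇(½‖w − w*‖₂²), f(w) − w⟩ = ⟨w − w*, A (w − w*)⟩ ≤ −η ‖w − w*‖₂²`. -/
theorem linear_td_lyapunov_drift
    {S : Type*} [Fintype S] [Nonempty S] [DecidableEq S] {K : ℕ}
    (P : Matrix S S ℝ)
    (hnonneg : ∀ i j, 0 ≤ P i j)
    (hrowsum : ∀ i, ∑ j, P i j = 1)
    (hirr : ∀ i j, ∃ n : ℕ, 0 < (P ^ n) i j)
    (haper : ∀ i, ∀ e : ℕ, (∀ n ∈ returnTimes P i, e ∣ n) → e = 1)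
    (d : S → ℝ) (hdnonneg : ∀ s, 0 ≤ d s) (hdsum : ∑ s, d s = 1)
    (hdstat : ∀ j, ∑ i, d i * P i j = d j)
    (X : Matrix S (Fin K) ℝ) (hX : Function.Injective X.mulVec)
    (r : S → ℝ)
    (γ : ℝ) (hγ0 : 0 ≤ γ) (hγ1 : γ < 1)
    (A : Matrix (Fin K) (Fin K) ℝ)
    (hA : A = Xᵀ * Matrix.diagonal d * (γ • P - 1) * X)
    (b : Fin K → ℝ) (hb : b = (Xᵀ * Matrix.diagonal d).mulVec r)
    (wstar : Fin K → ℝ) (hwstar : wstar = -(A⁻¹.mulVec b))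
    (f : (Fin K → ℝ) → (Fin K → ℝ)) (hf : f = fun w => A.mulVec w + b + w) :
    ∃ η > (0 : ℝ), ∀ w : Fin K → ℝ,
      (w - wstar) ⬝ᵥ (f w - w) = (w - wstar) ⬝ᵥ A.mulVec (w - wstar) ∧
      (w - wstar) ⬝ᵥ A.mulVec (w - wstar) ≤ -η * ((w - wstar) ⬝ᵥ (w - wstar)) := by
  obtain ⟨C, hC, hbound⟩ := exists_norm_bound d
    (stationary_pos P hnonneg hirr d hdnonneg hdsum hdstat) X hX
  have hη : 0 < (1 - γ) / C := div_pos (by linarith) hC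
  have hneg : ∀ u : Fin K → ℝ, u ⬝ᵥ A.mulVec u ≤ -((1 - γ) / C) * (u ⬝ᵥ u) := fun u => by
    have h1 := td_form_le P hnonneg hrowsum d hdnonneg hdstat X γ hγ0 u
    rw [← hA] at h1
    have h2 := mul_le_mul_of_nonneg_left (hbound u) hη.le
    rw [← mul_assoc, div_mul_cancel₀ _ hC.ne'] at h2
    linarith
  have hunit : IsUnit A := by
    rw [← Matrix.mulVec_injective_iff_isUnit]
    refine (injective_iff_map_eq_zero A.mulVecLin).2 fun u hu => ?_
    have h1 := hneg u
    rw [show A.mulVec u = 0 from hu, dotProduct_zero] at h1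
    have h2 : 0 ≤ u ⬝ᵥ u := Finset.sum_nonneg fun i _ => mul_self_nonneg (u i)
    exact dotProduct_self_eq_zero.1 (le_antisymm (by nlinarith) h2)
  have hfix : A.mulVec wstar = -b := by
    rw [hwstar, Matrix.mulVec_neg, Matrix.mulVec_mulVec,
      Matrix.mul_nonsing_inv _ ((Matrix.isUnit_iff_isUnit_det A).1 hunit), Matrix.one_mulVec]
  refine ⟨(1 - γ) / C, hη, fun w => ⟨?_, hneg _⟩⟩
  rw [hf, Matrix.mulVec_sub, hfix]
  congr 1
  simp
end

section
/- (Anchor sequence for polynomial step sizes.) Let ν ∈ (2/3, 1) and α_t = 1/(t+2)^ν for t ∈ ℕ. Then there exist a constant C ≥ 0 and a strictly increasing sequence of natural numbers {t_m} with t_0 = 0 and t_m → ∞ such that, setting β_m := ∑_{t = t_m}^{t_{m+1} − 1} α_t, the sequence {β_m} satisfies the Robbins–Monro condition (β_m > 0, ∑_m β_m = ∞, ∑_m β_m² < ∞) and moreover α_{t_m} ≤ C·β_m² for all m. -/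
open Finset Filter

/-!
Choose blocks of length `⌈(t_m + 2)^(ν/2)⌉`. Such a block is no longer than `t_m + 2`, so `t + 2`
stays within a factor `2` of `t_m + 2` on it, and `β_m` is comparable to `(t_m + 2)^(-ν/2)`,
whose square is `α_{t_m}`. The blocks partition `ℕ`, so divergence of `∑ β_m` is divergence of
`∑ α_t`. For the squares, `β_m² ≤ 2 (t_m + 2)^(-ν/2) β_m ≤ 4 ∑_{t in block m} (t + 2)^(-3ν/2)`, and
`∑_t (t + 2)^(-3ν/2)` converges because `3ν/2 > 1`.
-/

/-- The anchors: block `m` has length `⌈(t_m + 2)^(ν/2)⌉`. -/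
noncomputable def anchor (ν : ℝ) : ℕ → ℕ
  | 0 => 0
  | m + 1 => anchor ν m + ⌈((anchor ν m : ℝ) + 2) ^ (ν / 2)⌉₊

lemma sum_anchor_blocks (tm : ℕ → ℕ) (h0 : tm 0 = 0) (hm : Monotone tm) (f : ℕ → ℝ) (M : ℕ) :
    ∑ m ∈ range M, ∑ t ∈ Ico (tm m) (tm (m + 1)), f t = ∑ t ∈ range (tm M), f t := by
  induction M with
  | zero => simp [h0]
  | succ M ih =>
    rw [sum_range_succ, ih, sum_range_add_sum_Ico _ (hm (Nat.le_succ M))]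

/-- Estimates on one block starting at `n`: the block sum is at least a constant times the square
root of its first term, and its square is dominated by the block sum of `(t + 2)^(-3ν/2)`. -/
lemma block_bounds (ν : ℝ) (h0 : 0 < ν) (h1 : ν < 1) (n k : ℕ)
    (hk : k = ⌈((n : ℝ) + 2) ^ (ν / 2)⌉₊) :
    1 / ((n : ℝ) + 2) ^ ν ≤ 4 * (∑ t ∈ Ico n (n + k), 1 / ((t : ℝ) + 2) ^ ν) ^ 2 ∧
    (∑ t ∈ Ico n (n + k), 1 / ((t : ℝ) + 2) ^ ν) ^ 2 ≤
      ∑ t ∈ Ico n (n + k), 4 * (1 / ((t : ℝ) + 2) ^ (3 * ν / 2)) := by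
  have hX : (2 : ℝ) ≤ (n : ℝ) + 2 := by linarith [(Nat.cast_nonneg n : (0 : ℝ) ≤ n)]
  have hX0 : (0 : ℝ) < (n : ℝ) + 2 := by linarith
  set p : ℝ := ((n : ℝ) + 2) ^ (ν / 2) with hp
  have hp1 : 1 ≤ p := Real.one_le_rpow (by linarith) (by linarith)
  have hp0 : 0 < p := by linarith
  have hpp : ((n : ℝ) + 2) ^ ν = p ^ 2 := by
    rw [hp, sq, ← Real.rpow_add hX0]; congr 1; ring
  have hkp : p ≤ k := by rw [hk]; exact Nat.le_ceil _
  have hk2 : (k : ℝ) ≤ 2 * p := by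
    have := Nat.ceil_lt_add_one hp0.le
    rw [hk]; linarith
  have hkn : k ≤ n + 2 := by
    rw [hk]
    apply Nat.ceil_le.2
    push_cast
    calc p ≤ ((n : ℝ) + 2) ^ (1 : ℝ) :=
          Real.rpow_le_rpow_of_exponent_le (by linarith) (by linarith)
      _ = _ := Real.rpow_one _
  -- On the block, `(t + 2)^s` is within a factor `2` of its initial value for `0 ≤ s ≤ 1`.
  have hup : ∀ s : ℝ, 0 ≤ s → s ≤ 1 → ∀ t ∈ Ico n (n + k),
      ((t : ℝ) + 2) ^ s ≤ 2 * ((n : ℝ) + 2) ^ s := by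
    intro s hs0 hs1 t ht
    have ht' : t ≤ 2 * n + 2 := by have := (mem_Ico.1 ht).2; omega
    have ht2 : (t : ℝ) ≤ 2 * n + 2 := by exact_mod_cast ht'
    calc ((t : ℝ) + 2) ^ s ≤ (2 * ((n : ℝ) + 2)) ^ s :=
          Real.rpow_le_rpow (by positivity) (by linarith) hs0
      _ = 2 ^ s * ((n : ℝ) + 2) ^ s := Real.mul_rpow (by norm_num) hX0.le
      _ ≤ 2 * ((n : ℝ) + 2) ^ s := by
          gcongr
          calc (2 : ℝ) ^ s ≤ 2 ^ (1 : ℝ) :=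
                Real.rpow_le_rpow_of_exponent_le (by norm_num) hs1
            _ = 2 := Real.rpow_one _
  set S := ∑ t ∈ Ico n (n + k), 1 / ((t : ℝ) + 2) ^ ν with hS
  have hlow : 1 / (2 * p) ≤ S := by
    have h := card_nsmul_le_sum (Ico n (n + k)) (fun t : ℕ => 1 / ((t : ℝ) + 2) ^ ν)
      (1 / (2 * p ^ 2)) (fun t ht => by
        have := hup ν h0.le h1.le t ht
        rw [hpp] at this
        exact one_div_le_one_div_of_le (by positivity) this)
    rw [Nat.card_Ico, Nat.add_sub_cancel_left, nsmul_eq_mul] at h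
    calc 1 / (2 * p) = p * (1 / (2 * p ^ 2)) := by field_simp
      _ ≤ k * (1 / (2 * p ^ 2)) := by gcongr
      _ ≤ S := h
  have hhigh : S ≤ 2 / p := by
    have h := sum_le_card_nsmul (Ico n (n + k)) (fun t : ℕ => 1 / ((t : ℝ) + 2) ^ ν)
      (1 / p ^ 2) (fun t ht => by
        rw [← hpp]
        have : (n : ℝ) ≤ t := by exact_mod_cast (mem_Ico.1 ht).1
        exact one_div_le_one_div_of_le (by positivity)
          (Real.rpow_le_rpow hX0.le (by linarith) h0.le))
    rw [Nat.card_Ico, Nat.add_sub_cancel_left, nsmul_eq_mul] at h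
    calc S ≤ k * (1 / p ^ 2) := h
      _ ≤ (2 * p) * (1 / p ^ 2) := by gcongr
      _ = 2 / p := by field_simp
  have hS0 : 0 ≤ S := le_trans (by positivity) hlow
  constructor
  · rw [hpp]
    calc 1 / p ^ 2 = 4 * (1 / (2 * p)) ^ 2 := by field_simp; norm_num
      _ ≤ 4 * S ^ 2 := by gcongr
  · calc S ^ 2 = S * S := sq S
      _ ≤ (2 / p) * S := by gcongr
      _ = ∑ t ∈ Ico n (n + k), (2 / p) * (1 / ((t : ℝ) + 2) ^ ν) := by rw [hS, mul_sum]
      _ ≤ _ := by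
        apply sum_le_sum
        intro t ht
        have hT : (0 : ℝ) < (t : ℝ) + 2 := by positivity
        have h := hup (ν / 2) (by linarith) (by linarith) t ht
        have hq : 0 < ((t : ℝ) + 2) ^ (ν / 2) := by positivity
        have h2 : 2 / p ≤ 4 / ((t : ℝ) + 2) ^ (ν / 2) := by
          rw [div_le_div_iff₀ hp0 hq]; linarith
        have e : ((t : ℝ) + 2) ^ (3 * ν / 2)
            = ((t : ℝ) + 2) ^ (ν / 2) * ((t : ℝ) + 2) ^ ν := by
          rw [← Real.rpow_add hT]; congr 1; ring
        calc (2 / p) * (1 / ((t : ℝ) + 2) ^ ν)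
            ≤ (4 / ((t : ℝ) + 2) ^ (ν / 2)) * (1 / ((t : ℝ) + 2) ^ ν) := by gcongr
          _ = _ := by rw [e]; field_simp

lemma summable_shift_iff (s : ℝ) :
    Summable (fun t : ℕ => 1 / ((t : ℝ) + 2) ^ s) ↔ 1 < s := by
  rw [← Real.summable_one_div_nat_rpow,
    ← summable_nat_add_iff (f := fun n : ℕ => 1 / (n : ℝ) ^ s) 2]
  simp

/-- Anchor sequence for polynomial step sizes: for `α_t = 1/(t+2)^ν` with
`ν ∈ (2/3, 1)`, there is a strictly increasing anchor sequence `t_m` (with `t_0 = 0`,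
`t_m → ∞`) whose block step-size sums `β_m = ∑_{t = t_m}^{t_{m+1}−1} α_t` satisfy the
Robbins–Monro condition and additionally `α_{t_m} ≤ C β_m²` for some `C ≥ 0`. -/
theorem anchor_sequence_for_poly_stepsizes
    (ν : ℝ) (hν : ν ∈ Set.Ioo (2 / 3 : ℝ) 1)
    (α : ℕ → ℝ) (hα : α = fun t : ℕ => 1 / ((t : ℝ) + 2) ^ ν) :
    ∃ (C : ℝ) (tm : ℕ → ℕ), 0 ≤ C ∧
      StrictMono tm ∧ tm 0 = 0 ∧ Tendsto tm atTop atTop ∧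
      (∀ m, 0 < ∑ t ∈ Finset.Ico (tm m) (tm (m + 1)), α t) ∧
      Tendsto (fun M => ∑ m ∈ Finset.range M,
        ∑ t ∈ Finset.Ico (tm m) (tm (m + 1)), α t) atTop atTop ∧
      Summable (fun m => (∑ t ∈ Finset.Ico (tm m) (tm (m + 1)), α t) ^ 2) ∧
      ∀ m, α (tm m) ≤ C * (∑ t ∈ Finset.Ico (tm m) (tm (m + 1)), α t) ^ 2 := by
  obtain ⟨hν1, hν2⟩ := hν
  subst hα
  have hmono : StrictMono (anchor ν) := by
    apply strictMono_nat_of_lt_succ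
    intro m
    have : 0 < ⌈((anchor ν m : ℝ) + 2) ^ (ν / 2)⌉₊ := Nat.ceil_pos.2 (by positivity)
    rw [anchor]
    omega
  have hb := fun m => block_bounds ν (by linarith) hν2 (anchor ν m) _ rfl
  refine ⟨4, anchor ν, by norm_num, hmono, rfl, hmono.tendsto_atTop, ?_, ?_, ?_,
    fun m => (hb m).1⟩
  · intro m
    exact sum_pos (fun t _ => by positivity) (nonempty_Ico.2 (hmono (Nat.lt_succ_self m)))
  · simp only [sum_anchor_blocks (anchor ν) rfl hmono.monotone]
    have hdiv := (not_summable_iff_tendsto_nat_atTop_of_nonneg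
      (f := fun t : ℕ => 1 / ((t : ℝ) + 2) ^ ν) (fun t => by positivity)).1
      (by rw [summable_shift_iff]; linarith)
    exact hdiv.comp hmono.tendsto_atTop
  · have hs : Summable (fun t : ℕ => 4 * (1 / ((t : ℝ) + 2) ^ (3 * ν / 2))) :=
      ((summable_shift_iff _).2 (by linarith)).mul_left 4
    refine summable_of_sum_range_le (c := ∑' t : ℕ, 4 * (1 / ((t : ℝ) + 2) ^ (3 * ν / 2)))
      (fun m => sq_nonneg _) (fun M => ?_)
    refine (sum_le_sum fun m _ => (hb m).2).trans ?_
    refine (sum_anchor_blocks (anchor ν) rfl hmono.monotone _ M).trans_le ?_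
    exact hs.sum_le_tsum _ (fun t _ => by positivity)
end

section
/- Consider iterates w_{t+1} = w_t + α_t·G(w_t, Y_{t+1}) in ℝᵈ, where G is Lipschitz in its first argument uniformly in the second and satisfies a linear growth bound ‖G(w, y)‖ ≤ L(1 + ‖w‖) for all w, y, the step sizes satisfy α_t > 0 and α_t → 0, and {t_m} is a strictly increasing anchor sequence with t_0 = 0 and block step-size sums β_m := ∑_{t=t_m}^{t_{m+1}−1} α_t. If β_m ≤ B for all m, β_m → 0, and the skeleton sequence converges, w_{t_m}(ω) → w* as m → ∞, then the full sequence converges: w_t(ω) → w* as t → ∞, for the same ω. In particular the set of sample paths on which the skeleton converges is contained (up to a null set) in the set on which the full iterate sequence converges. -/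
/-!
Within a block, a discrete Gronwall argument bounds the drift away from the anchor:
`‖w_t - w_{t_m}‖ ≤ (1 + ‖w_{t_m}‖) (exp (L β_m) - 1)` for `t_m ≤ t < t_{m+1}`
(`norm_sub_le_exp_sum`, from the linear growth of `G`). Since the skeleton converges,
the first factor stays bounded, and `β_m → 0` sends the second one to `0`. Hence the distance
from `w_t` to `w*` is bounded by a quantity depending only on the block index `m` of `t` and
vanishing as `m → ∞`; as the anchors are strictly increasing, `t → ∞` forces `m → ∞`
(`exists_block`).
-/

open Finset Filter

/-- Discrete Gronwall bound for a sequence whose increments grow at most linearly. -/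
lemma norm_sub_le_exp_sum {E : Type*} [NormedAddCommGroup E] (u : ℕ → E) (α : ℕ → ℝ)
    (hα : ∀ t, 0 ≤ α t) (L : ℝ) (hL : 0 ≤ L)
    (hu : ∀ t, ‖u (t + 1) - u t‖ ≤ α t * (L * (1 + ‖u t‖))) (s t : ℕ) (hst : s ≤ t) :
    ‖u t - u s‖ ≤ (1 + ‖u s‖) * (Real.exp (L * ∑ k ∈ Finset.Ico s t, α k) - 1) := by
  induction t, hst using Nat.le_induction with
  | base => simp
  | succ t hst ih =>
    rw [Finset.sum_Ico_succ_top hst, mul_add, Real.exp_add]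
    set e := Real.exp (L * ∑ k ∈ Finset.Ico s t, α k) with he
    have hαL : 0 ≤ α t * L := mul_nonneg (hα t) hL
    have htri : ‖u (t + 1) - u s‖ ≤ ‖u (t + 1) - u t‖ + ‖u t - u s‖ :=
      norm_sub_le_norm_sub_add_norm_sub _ _ _
    have hut : ‖u t‖ ≤ ‖u s‖ + ‖u t - u s‖ := by
      simpa using norm_add_le (u s) (u t - u s)
    have hexp : α t * L + 1 ≤ Real.exp (L * α t) := by
      rw [mul_comm (α t)]; exact Real.add_one_le_exp _
    calc ‖u (t + 1) - u s‖
        ≤ α t * (L * (1 + ‖u t‖)) + ‖u t - u s‖ := htri.trans (by gcongr; exact hu t)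
      _ ≤ α t * (L * (1 + (‖u s‖ + ‖u t - u s‖))) + ‖u t - u s‖ := by
          have := hα t
          gcongr
      _ = α t * L * (1 + ‖u s‖) + (α t * L + 1) * ‖u t - u s‖ := by ring
      _ ≤ α t * L * (1 + ‖u s‖) + (α t * L + 1) * ((1 + ‖u s‖) * (e - 1)) := by gcongr
      _ = (1 + ‖u s‖) * (e * (α t * L + 1) - 1) := by ring
      _ ≤ (1 + ‖u s‖) * (e * Real.exp (L * α t) - 1) := by
          have : 0 ≤ e := (Real.exp_pos _).le
          gcongr

/-- Every time past the anchor `tm M` lies in a block of index at least `M`. -/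
lemma exists_block (tm : ℕ → ℕ) (htm : StrictMono tm) (M t : ℕ) (ht : tm M ≤ t) :
    ∃ m, M ≤ m ∧ tm m ≤ t ∧ t < tm (m + 1) := by
  induction t, ht using Nat.le_induction with
  | base => exact ⟨M, le_rfl, le_rfl, htm (Nat.lt_succ_self M)⟩
  | succ t _ ih =>
    obtain ⟨m, hMm, h1, h2⟩ := ih
    rcases Nat.lt_or_ge (t + 1) (tm (m + 1)) with h | h
    · exact ⟨m, hMm, by omega, h⟩
    · exact ⟨m + 1, by omega, h, lt_of_le_of_lt (by omega) (htm (Nat.lt_succ_self (m + 1)))⟩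

/-- Skeleton-to-full-sequence convergence: for pathwise iterates
`w_{t+1}(ω) = w_t(ω) + α_t G(w_t(ω), Y_{t+1}(ω))` where `G` is Lipschitz in its first
argument uniformly in the second and has linear growth, with positive vanishing step
sizes and anchors whose block sums `β_m` are bounded and vanish, convergence of the
skeleton sequence `w_{t_m}(ω) → w*` implies convergence of the full sequence
`w_t(ω) → w*`, for the same sample path `ω`. -/
theorem tendsto_of_skeleton_tendsto
    {Ω 𝒴 : Type*} {d : ℕ}
    (G : EuclideanSpace ℝ (Fin d) → 𝒴 → EuclideanSpace ℝ (Fin d))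
    (L : NNReal)
    (hLip : ∀ y, LipschitzWith L (fun v => G v y))
    (hGrow : ∀ v y, ‖G v y‖ ≤ L * (1 + ‖v‖))
    (α : ℕ → ℝ) (hαpos : ∀ t, 0 < α t) (hα0 : Tendsto α atTop (nhds 0))
    (Yseq : ℕ → Ω → 𝒴)
    (w : ℕ → Ω → EuclideanSpace ℝ (Fin d))
    (hwstep : ∀ t ω, w (t + 1) ω = w t ω + α t • G (w t ω) (Yseq (t + 1) ω))
    (tm : ℕ → ℕ) (htm : StrictMono tm) (htm0 : tm 0 = 0)
    (B : ℝ)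
    (hβbdd : ∀ m, ∑ t ∈ Finset.Ico (tm m) (tm (m + 1)), α t ≤ B)
    (hβ0 : Tendsto (fun m => ∑ t ∈ Finset.Ico (tm m) (tm (m + 1)), α t)
      atTop (nhds 0))
    (wstar : EuclideanSpace ℝ (Fin d)) :
    ∀ ω : Ω, Tendsto (fun m => w (tm m) ω) atTop (nhds wstar) →
      Tendsto (fun t => w t ω) atTop (nhds wstar) := by
  intro ω hskel
  have hstep : ∀ t, ‖w (t + 1) ω - w t ω‖ ≤ α t * (L * (1 + ‖w t ω‖)) := by
    intro t
    rw [hwstep, add_sub_cancel_left, norm_smul, Real.norm_of_nonneg (hαpos t).le]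
    exact mul_le_mul_of_nonneg_left (hGrow _ _) (hαpos t).le
  have hbound : Tendsto (fun m => (1 + ‖w (tm m) ω‖) *
      (Real.exp (L * ∑ t ∈ Finset.Ico (tm m) (tm (m + 1)), α t) - 1)
      + ‖w (tm m) ω - wstar‖) atTop (nhds 0) := by
    have h1 := hskel.norm.const_add 1
    have h2 := ((Real.continuous_exp.tendsto _).comp (hβ0.const_mul (L : ℝ))).sub_const 1
    have h3 := (hskel.sub_const wstar).norm
    simpa [Function.comp_def] using (h1.mul h2).add h3
  rw [Metric.tendsto_atTop]
  intro ε hε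
  obtain ⟨M, hM⟩ := eventually_atTop.1 (hbound.eventually_lt_const hε)
  refine ⟨tm M, fun t ht => ?_⟩
  obtain ⟨m, hMm, hmt, htm1⟩ := exists_block tm htm M t ht
  rw [dist_eq_norm]
  refine lt_of_le_of_lt ?_ (hM m hMm)
  refine (norm_sub_le_norm_sub_add_norm_sub _ (w (tm m) ω) _).trans ?_
  gcongr
  refine (norm_sub_le_exp_sum (fun t => w t ω) α (fun t => (hαpos t).le) L L.2
    hstep (tm m) t hmt).trans ?_
  -- Enlarging the partial block sum to `β_m` makes the bound independent of `t`.
  have hsum : ∑ k ∈ Finset.Ico (tm m) t, α k ≤ ∑ k ∈ Finset.Ico (tm m) (tm (m + 1)), α k :=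
    Finset.sum_le_sum_of_subset_of_nonneg (Finset.Ico_subset_Ico_right htm1.le)
      (fun k _ _ => (hαpos k).le)
  gcongr
end
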